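/- arXiv:2401.17850 — 3 statements merged into one kernel-verified Lean document; each statement's English description precedes it below -/
import Mathlib

section
/- Let d ≥ 1 and let f ∈ MvPolynomial (Fin 3) ℂ have order ≥ d, and assume the degree-d homogeneous component f_d is squarefree. Let f̃ := Σ_{j≥0} y₁^j · f_{d+j}(1,y₂,y₃) be the strict transform of f. Then the set {(b₂,b₃) ∈ ℂ² : f̃(0,b₂,b₃) = 0 and all three partial derivatives of f̃ vanish at (0,b₂,b₃)} is finite. (Chart form of Lemma 3.4: the strict transform of V(f) has only finitely many singular points on the exceptional divisor.) -/
open MvPolynomial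

/-- Elimination: an ideal of `A[X]` without common nonunit divisor meets `A` nontrivially. -/
theorem elim_poly {A : Type*} [CommRing A] [IsDomain A] [UniqueFactorizationMonoid A]
    (I : Ideal (Polynomial A))
    (hI : ∀ p : Polynomial A, (∀ g ∈ I, p ∣ g) → IsUnit p) :
    ∃ r : A, r ≠ 0 ∧ Polynomial.C r ∈ I := by
  classical
  letI : NormalizedGCDMonoid A := Classical.choice inferInstance
  let K := FractionRing A
  letI : Algebra (Polynomial A) (Polynomial K) := Polynomial.algebra A K
  haveI : IsLocalization ((nonZeroDivisors A).map Polynomial.C) (Polynomial K) :=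
    Polynomial.isLocalization (nonZeroDivisors A) K
  have hmap : ∀ g : Polynomial A,
      algebraMap (Polynomial A) (Polynomial K) g = g.map (algebraMap A K) := fun g => rfl
  by_cases htop : I.map (algebraMap (Polynomial A) (Polynomial K)) = ⊤
  · have h := mt (IsLocalization.map_algebraMap_ne_top_iff_disjoint
      ((nonZeroDivisors A).map Polynomial.C) (Polynomial K) I).mpr (by simpa using htop)
    rw [Set.not_disjoint_iff] at h
    obtain ⟨x, ⟨r, hr, rfl⟩, hx⟩ := h
    exact ⟨r, nonZeroDivisors.ne_zero hr, hx⟩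
  · exfalso
    obtain ⟨q, hq⟩ := (inferInstance :
      (I.map (algebraMap (Polynomial A) (Polynomial K))).IsPrincipal)
    have hqI : ∀ g ∈ I, q ∣ g.map (algebraMap A K) := by
      intro g hg
      have := Ideal.mem_map_of_mem (algebraMap (Polynomial A) (Polynomial K)) hg
      rw [hq] at this
      exact Ideal.mem_span_singleton.mp this
    by_cases hq0 : q = 0
    · apply Polynomial.not_isUnit_X (R := A)
      apply hI
      intro g hg
      have h1 := hqI g hg
      rw [hq0, zero_dvd_iff, Polynomial.map_eq_zero_iff (IsFractionRing.injective A K)] at h1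
      simp [h1]
    · have hu : IsUnit q := by
        apply Polynomial.isUnit_or_eq_zero_of_isUnit_integerNormalization_primPart (R := A) hq0
        apply hI
        intro g hg
        apply (Polynomial.isPrimitive_primPart _).dvd_of_fraction_map_dvd_fraction_map (K := K)
        refine dvd_trans ?_ (hqI g hg)
        obtain ⟨c, c0, hc⟩ := IsLocalization.integerNormalization_spec (nonZeroDivisors A) q
        rw [Algebra.smul_def, Polynomial.algebraMap_apply] at hc
        have hcu : IsUnit (Polynomial.C (algebraMap A K c)) := by
          rw [Polynomial.isUnit_C, isUnit_iff_ne_zero]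
          intro h
          exact nonZeroDivisors.ne_zero c0
            ((map_eq_zero_iff _ (IsFractionRing.injective A K)).mp h)
        rw [← hcu.dvd_mul_left, ← hc]
        exact Polynomial.map_dvd _ (Polynomial.primPart_dvd _)
      apply htop
      rw [hq]
      exact Ideal.span_singleton_eq_top.mpr hu

theorem elim_mv (e : Equiv.Perm (Fin 3)) (I : Ideal (MvPolynomial (Fin 3) ℂ))
    (hI : ∀ p, (∀ g ∈ I, p ∣ g) → IsUnit p) :
    ∃ r : MvPolynomial (Fin 2) ℂ, r ≠ 0 ∧ rename (fun i => e i.succ) r ∈ I := by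
  let Φ : MvPolynomial (Fin 3) ℂ ≃ₐ[ℂ] Polynomial (MvPolynomial (Fin 2) ℂ) :=
    (renameEquiv ℂ e.symm).trans (finSuccEquiv ℂ 2)
  obtain ⟨r, hr, hrI⟩ := elim_poly
    (I.comap (Φ.symm : Polynomial (MvPolynomial (Fin 2) ℂ) →ₐ[ℂ] _).toRingHom) (by
      intro p hp
      have h : IsUnit (Φ.symm p) := by
        apply hI
        intro g hg
        have h1 := hp (Φ g) (by simpa [Ideal.mem_comap] using hg)
        simpa using map_dvd Φ.symm h1
      simpa using h.map Φ)
  refine ⟨r, hr, ?_⟩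
  have key : rename (fun i => e i.succ) r = Φ.symm (Polynomial.C r) := by
    rw [AlgEquiv.eq_symm_apply]
    have : Φ.toAlgHom.comp (rename (fun i : Fin 2 => e i.succ)) =
        IsScalarTower.toAlgHom ℂ (MvPolynomial (Fin 2) ℂ) _ := by
      ext i : 1
      simp [Φ, finSuccEquiv_X_succ]
    exact DFunLike.congr_fun this r
  rw [key]
  exact hrI

theorem pderiv_eq_zero_of_dvd (p : MvPolynomial (Fin 3) ℂ) (i : Fin 3)
    (h : p ∣ pderiv i p) : pderiv i p = 0 := by
  by_contra hne
  obtain ⟨q, hq⟩ := h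
  have hp : p ≠ 0 := by rintro rfl; simp at hne
  have hq0 : q ≠ 0 := by rintro rfl; simp [hq] at hne
  have h1 := totalDegree_mul_of_isDomain hp hq0
  rw [← hq] at h1
  have hs : (pderiv i p).support.Nonempty := by simpa [Finset.nonempty_iff_ne_empty] using hne
  obtain ⟨m, hm, hmt⟩ := Finset.exists_mem_eq_sup _ hs (fun s => s.sum fun _ e => e)
  have h2 : (pderiv i p).totalDegree = m.sum fun _ e => e := hmt
  rw [mem_support_iff, coeff_pderiv] at hm
  have h3 : m + Finsupp.single i 1 ∈ p.support := by
    rw [mem_support_iff]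
    intro h
    simp [h] at hm
  have h4 := le_totalDegree h3
  rw [Finsupp.sum_add_index' (by simp) (by simp)] at h4
  simp at h4
  omega

theorem eq_C_of_pderiv (p : MvPolynomial (Fin 3) ℂ) (h : ∀ i, pderiv i p = 0) :
    p = C (p.coeff 0) := by
  ext m
  rw [coeff_C]
  split_ifs with hm
  · rw [hm]
  · obtain ⟨i, hi⟩ : ∃ i, m i ≠ 0 := by
      by_contra hcon
      push Not at hcon
      exact hm (by ext i; simp [hcon i])
    have h1 := congrArg (coeff (m - Finsupp.single i 1)) (h i)
    have h2 : m - Finsupp.single i 1 + Finsupp.single i 1 = m :=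
      tsub_add_cancel_of_le (by simpa using Nat.one_le_iff_ne_zero.mpr hi)
    rw [coeff_pderiv, h2, coeff_zero] at h1
    rcases mul_eq_zero.mp h1 with h1 | h1
    · exact h1
    · exact absurd h1 (Nat.cast_add_one_ne_zero _)

theorem isUnit_of_dvd_all (F p : MvPolynomial (Fin 3) ℂ) (hF : Squarefree F)
    (h : p ∣ F) (hi : ∀ i, p ∣ pderiv i F) : IsUnit p := by
  by_contra hpu
  have hp0 : p ≠ 0 := by
    rintro rfl
    exact hF.ne_zero (zero_dvd_iff.mp h)
  obtain ⟨q, hq, hqp⟩ := WfDvdMonoid.exists_irreducible_factor hpu hp0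
  have hqprime : Prime q := hq.prime
  obtain ⟨k, hk⟩ := hqp.trans h
  have hnk : ¬ q ∣ k := by
    rintro ⟨l, rfl⟩
    exact hq.not_isUnit (hF q ⟨l, by rw [hk]; ring⟩)
  have hz : ∀ i, pderiv i q = 0 := by
    intro i
    apply pderiv_eq_zero_of_dvd
    have h1 := hqp.trans (hi i)
    rw [hk, pderiv_mul] at h1
    have h2 := (dvd_add_left (dvd_mul_right q (pderiv i k))).mp h1
    exact (hqprime.dvd_or_dvd h2).resolve_right hnk
  have h5 := eq_C_of_pderiv q hz
  apply hq.not_isUnit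
  rw [h5]
  refine IsUnit.map C (isUnit_iff_ne_zero.mpr ?_)
  intro h0
  rw [h0] at h5
  exact hq.ne_zero (by simpa using h5)

theorem eval_cone {n : ℕ} (F : MvPolynomial (Fin 3) ℂ) (hF : F.IsHomogeneous n)
    (v : Fin 3 → ℂ) (h : eval v F = 0) (t : ℂ) : eval (fun i => t * v i) F = 0 := by
  have : eval (fun i => t * v i) F = t ^ n * eval v F := by
    rw [eval_eq, eval_eq, Finset.mul_sum]
    refine Finset.sum_congr rfl fun m hm => ?_
    have hd : ∑ i ∈ m.support, m i = n := by
      have := hF (mem_support_iff.mp hm)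
      have h2 := DFunLike.congr_fun (Finsupp.degree_eq_weight_one (σ := Fin 3) (R := ℕ)) m
      exact h2.trans this
    rw [← hd, ← Finset.prod_pow_eq_pow_sum]
    simp_rw [mul_pow]
    rw [Finset.prod_mul_distrib]
    ring
  rw [this, h, mul_zero]

theorem finite_dir (r : MvPolynomial (Fin 2) ℂ) (hr : r ≠ 0) :
    {b : ℂ | ∀ t : ℂ, eval ![t, t * b] r = 0}.Finite := by
  have hx : X 0 * r ≠ 0 := mul_ne_zero (X_ne_zero 0) hr
  obtain ⟨v, hv⟩ : ∃ v, eval v (X 0 * r) ≠ 0 := by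
    by_contra hcon
    push Not at hcon
    exact hx (MvPolynomial.funext (by simpa using hcon))
  simp only [map_mul, eval_X] at hv
  have hv0 : v 0 ≠ 0 := left_ne_zero_of_mul hv
  have hvr := right_ne_zero_of_mul hv
  let q : Polynomial ℂ :=
    aeval ![Polynomial.C (v 0), Polynomial.C (v 0) * Polynomial.X] r
  have hq : ∀ b, q.eval b = eval ![v 0, v 0 * b] r := by
    intro b
    have : (Polynomial.aeval b).comp
        (aeval (R := ℂ) ![Polynomial.C (v 0), Polynomial.C (v 0) * Polynomial.X]) =
        aeval ![v 0, v 0 * b] := by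
      ext i
      fin_cases i <;> simp
    exact DFunLike.congr_fun this r
  have hq0 : q ≠ 0 := by
    intro h
    apply hvr
    have h1 := hq (v 1 / v 0)
    rw [h, Polynomial.eval_zero, mul_div_cancel₀ _ hv0] at h1
    have : ![v 0, v 1] = v := by ext i; fin_cases i <;> rfl
    rw [this] at h1
    exact h1.symm
  refine (q.rootSet_finite ℂ).subset ?_
  intro b hb
  rw [Polynomial.mem_rootSet]
  refine ⟨hq0, ?_⟩
  have := hq b
  rw [hb (v 0)] at this
  simpa using this

theorem pderiv_chart (F : MvPolynomial (Fin 3) ℂ) (i : Fin 3) (hi : i ≠ 0) :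
    pderiv i (aeval ![1, X 1, X 2] F : MvPolynomial (Fin 3) ℂ) =
      aeval ![1, X 1, X 2] (pderiv i F) := by
  induction F using MvPolynomial.induction_on with
  | C a => simp
  | add p q hp hq => simp only [map_add, hp, hq]
  | mul_X p j hp =>
    simp only [map_mul, pderiv_mul, aeval_X, hp, map_add]
    congr 2
    fin_cases i
    · exact absurd rfl hi
    · fin_cases j <;> simp [pderiv_X]
    · fin_cases j <;> simp [pderiv_X]

theorem eval_chart (F : MvPolynomial (Fin 3) ℂ) (b c : ℂ) :
    eval ![0, b, c] (aeval ![1, X 1, X 2] F : MvPolynomial (Fin 3) ℂ) = eval ![1, b, c] F := by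
  have : (aeval ![0, b, c] : MvPolynomial (Fin 3) ℂ →ₐ[ℂ] ℂ).comp
      (aeval (R := ℂ) (![1, X 1, X 2] : Fin 3 → MvPolynomial (Fin 3) ℂ)) =
      aeval ![1, b, c] := by
    ext i
    fin_cases i <;> simp
  exact DFunLike.congr_fun this F

/-- Chart form of Lemma 3.4: if the tangent cone `f_d` is squarefree (i.e. reduced),
then the strict transform `f̃ = Σ_j y₁^j · f_{d+j}(1,y₂,y₃)` of `V(f)` has only
finitely many singular points on the exceptional divisor `y₁ = 0`. -/
theorem finite_singular_points_on_exceptional_divisor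
    (d : ℕ) (hd : 1 ≤ d) (f : MvPolynomial (Fin 3) ℂ)
    (horder : ∀ k < d, homogeneousComponent k f = 0)
    (hsq : Squarefree (homogeneousComponent d f))
    (ftilde : MvPolynomial (Fin 3) ℂ)
    (hft : ftilde =
      ∑ j ∈ Finset.range (f.totalDegree + 1),
        X 0 ^ j * aeval ![1, X 1, X 2] (homogeneousComponent (d + j) f)) :
    {p : ℂ × ℂ |
      eval ![0, p.1, p.2] ftilde = 0 ∧
      ∀ i : Fin 3, eval ![0, p.1, p.2] (pderiv i ftilde) = 0}.Finite := by
  set F := homogeneousComponent d f with hFdef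
  have hF : F.IsHomogeneous d := homogeneousComponent_isHomogeneous d f
  rw [Finset.sum_range_succ'] at hft
  simp only [pow_zero, one_mul, add_zero, ← hFdef] at hft
  let I : Ideal (MvPolynomial (Fin 3) ℂ) :=
    Ideal.span (insert F (Set.range fun i => pderiv i F))
  have hI : ∀ p, (∀ g ∈ I, p ∣ g) → IsUnit p := by
    intro p hp
    exact isUnit_of_dvd_all F p hsq (hp _ (Ideal.subset_span (Set.mem_insert _ _)))
      fun i => hp _ (Ideal.subset_span (Set.mem_insert_of_mem _ ⟨i, rfl⟩))
  obtain ⟨r, hr, hrI⟩ := elim_mv (finRotate 3).symm I hI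
  obtain ⟨s, hs, hsI⟩ := elim_mv (Equiv.swap 0 1) I hI
  refine ((finite_dir r hr).prod (finite_dir s hs)).subset ?_
  rintro ⟨b, c⟩ ⟨h0, hder⟩
  simp only at h0 hder
  have e0 : eval ![1, b, c] F = 0 := by
    rw [hft] at h0
    simpa [-aeval_eq_bind₁, -map_aeval, eval_chart, pow_succ] using h0
  have ei : ∀ i : Fin 3, i ≠ 0 → eval ![1, b, c] (pderiv i F) = 0 := by
    intro i hi
    have h1 := hder i
    rw [hft] at h1
    have hX : pderiv i (X 0 : MvPolynomial (Fin 3) ℂ) = 0 := pderiv_X_of_ne hi.symm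
    simpa [-aeval_eq_bind₁, -map_aeval, eval_chart, pow_succ, pderiv_chart _ i hi, pderiv_mul, hX] using h1
  have e1 : eval ![1, b, c] (pderiv 0 F) = 0 := by
    have h1 := congrArg (eval ![1, b, c]) hF.sum_X_mul_pderiv
    simpa [Fin.sum_univ_three, e0, ei 1 (by decide), ei 2 (by decide)] using h1
  have eall : ∀ i : Fin 3, eval ![1, b, c] (pderiv i F) = 0 := by
    intro i
    by_cases hi : i = 0
    · rw [hi]; exact e1
    · exact ei i hi
  have hvan : ∀ t : ℂ, ∀ g ∈ I, eval (fun i => t * ![1, b, c] i) g = 0 := by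
    intro t g hg
    have hle : I ≤ RingHom.ker (eval (fun i => t * ![1, b, c] i)) := by
      rw [Ideal.span_le]
      rintro x (rfl | ⟨i, rfl⟩)
      · exact eval_cone _ hF _ e0 t
      · exact eval_cone _ hF.pderiv _ (eall i) t
    exact hle hg
  constructor
  · intro t
    have h1 := hvan t _ hrI
    rw [eval_rename] at h1
    convert h1 using 3
    ext i
    fin_cases i
    · simp [show (finRotate 3).symm 1 = 0 by decide]
    · simp [show (finRotate 3).symm 2 = 1 by decide]
  · intro t
    have h1 := hvan t _ hsI
    rw [eval_rename] at h1
    convert h1 using 3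
    ext i
    fin_cases i
    · simp
    · simp [show (Equiv.swap (0 : Fin 3) 1) 2 = 2 by decide]
end

section
/- Let g ∈ MvPolynomial (Fin 3) ℂ, with variables X₁,X₂,X₃, be of the form g = X₂² + X₃² + r, where every exponent vector in the support of r has positive X₁-exponent. Assume that the origin is an isolated point of the set {z ∈ ℂ³ : g(z) = 0 and all three partial derivatives of g vanish at z}. Then there exist an integer ℓ ≥ 1, a constant c ∈ ℂ with c ≠ 0, and one-variable polynomials p, q ∈ Polynomial ℂ with p(0) = q(0) = 0, such that the polynomial g' := g(X₁, X₂ − p(X₁), X₃ − q(X₁)) (obtained from g by the admissible coordinate change x₂ ↦ x₂ + p(x₁), x₃ ↦ x₃ + q(x₁)) can be written g' = X₂² + X₃² + c·X₁^ℓ + R, where every exponent vector (a,b,e) in the support of R satisfies a ≥ 1 and 2a + ℓ(b+e) > 2ℓ. (Polynomial form of Lemma 4.1: at an A₁-point, the Newton principal part of the strict transform can be brought to the form x₂² + x₃² + c x₁^ℓ, all remaining monomials lying strictly above the Newton boundary.) -/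
open MvPolynomial

open Filter Topology Asymptotics in
theorem aux_poly_coeff (N : ℕ) : ∀ f : Polynomial ℂ,
    (fun x : ℂ => f.eval x) =O[𝓝[≠] 0] (fun x => x ^ N) → ∀ n < N, f.coeff n = 0 := by
  induction N with
  | zero => intro f _ n hn; omega
  | succ N ih =>
    intro f hf
    have h1 : Tendsto (fun x : ℂ => x ^ (N+1)) (𝓝[≠] 0) (𝓝 0) := by
      have : Tendsto (fun x : ℂ => x ^ (N+1)) (𝓝 0) (𝓝 (0 ^ (N+1))) :=
        (continuous_pow (N+1)).tendsto 0
      simpa using this.mono_left nhdsWithin_le_nhds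
    have h2 := hf.trans_tendsto h1
    have h3 : Tendsto (fun x : ℂ => f.eval x) (𝓝[≠] 0) (𝓝 (f.eval 0)) :=
      (f.continuous.tendsto 0).mono_left nhdsWithin_le_nhds
    have h4 : f.eval 0 = 0 := tendsto_nhds_unique h3 h2
    have h5 : f.coeff 0 = 0 := by rw [Polynomial.coeff_zero_eq_eval_zero, h4]
    have h6 : (fun x : ℂ => f.divX.eval x) =O[𝓝[≠] 0] (fun x => x ^ N) := by
      obtain ⟨K, hK⟩ := hf.bound
      refine IsBigO.of_bound K ?_
      filter_upwards [hK, self_mem_nhdsWithin] with x hx hx0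
      have hx0 : x ≠ 0 := hx0
      have e : f.eval x = f.divX.eval x * x := by
        conv_lhs => rw [← f.divX_mul_X_add]
        simp [h5]
      rw [e, norm_mul, pow_succ, norm_mul, ← mul_assoc] at hx
      exact le_of_mul_le_mul_right hx (norm_pos_iff.2 hx0)
    intro n hn
    rcases n with _ | n
    · exact h5
    · rw [← Polynomial.coeff_divX]
      exact ih _ h6 n (by omega)

theorem aux_hasFDeriv (g : MvPolynomial (Fin 3) ℂ) (z : Fin 3 → ℂ) :
    HasFDerivAt (fun w : Fin 3 → ℂ => eval w g)
      (∑ i : Fin 3, eval z (pderiv i g) •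
        (ContinuousLinearMap.proj (R := ℂ) (φ := fun _ : Fin 3 => ℂ) i)) z := by
  induction g using MvPolynomial.induction_on with
  | C a =>
    simp only [eval_C]
    refine (hasFDerivAt_const (𝕜 := ℂ) a z).congr_fderiv ?_
    ext v
    simp
  | add p q hp hq =>
    simp only [map_add]
    refine (hp.add hq).congr_fderiv ?_
    ext v
    simp [Fin.sum_univ_three]
    ring
  | mul_X p j hp =>
    simp only [map_mul, eval_X]
    refine (hp.mul ((ContinuousLinearMap.proj (R := ℂ)
      (φ := fun _ : Fin 3 => ℂ) j).hasFDerivAt (x := z))).congr_fderiv ?_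
    ext v
    simp only [Derivation.leibniz, map_add, smul_eq_mul, map_mul, eval_X, Fin.sum_univ_three]
    simp only [pderiv_X]
    fin_cases j <;> simp [Pi.single_apply] <;> ring

theorem aux_X_dvd (f : MvPolynomial (Fin 3) ℂ) : (∀ mo ∈ f.support, 1 ≤ mo 0) ↔ X 0 ∣ f := by
  rw [X_dvd_iff_modMonomial_eq_zero]
  constructor
  · intro h
    ext m
    by_cases hm : Finsupp.single 0 1 ≤ m
    · rw [coeff_modMonomial_of_le _ hm]; simp
    · rw [coeff_modMonomial_of_not_le _ hm]
      by_contra hc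
      exact hm (by simpa using h m (by simpa [mem_support_iff] using hc))
  · intro h m hm
    by_contra hc
    have : ¬ Finsupp.single 0 1 ≤ m := by simpa using hc
    have h2 := coeff_modMonomial_of_not_le f this
    rw [h] at h2
    simp at h2
    exact (mem_support_iff.1 hm) h2.symm

theorem aux_coeff0 (f : MvPolynomial (Fin 3) ℂ) (n : ℕ) :
    (aeval ![(Polynomial.X : Polynomial ℂ), 0, 0] f).coeff n = coeff (Finsupp.single 0 n) f := by
  induction f using MvPolynomial.induction_on' with
  | monomial u a =>
    rw [aeval_monomial, coeff_monomial, Finsupp.prod_fintype _ _ (by simp), Fin.prod_univ_three]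
    have key : u = Finsupp.single 0 n ↔ u 0 = n ∧ u 1 = 0 ∧ u 2 = 0 := by
      constructor
      · rintro rfl; simp
      · rintro ⟨h0, h1, h2⟩
        ext i; fin_cases i <;> simp [h0, h1, h2]
    rw [if_congr key rfl rfl]
    by_cases h1 : u 1 = 0
    · by_cases h2 : u 2 = 0
      · simp [h1, h2, Polynomial.coeff_X_pow, eq_comm]
      · simp [h2]
    · simp [h1]
  | add p q hp hq => simp [hp, hq]

theorem aux_pderiv (i : Fin 3) (hi : i ≠ 0) (p q : Polynomial ℂ) (g : MvPolynomial (Fin 3) ℂ) :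
    pderiv i (aeval
          ![X 0,
            X 1 - Polynomial.aeval (X 0 : MvPolynomial (Fin 3) ℂ) p,
            X 2 - Polynomial.aeval (X 0 : MvPolynomial (Fin 3) ℂ) q] g) =
     aeval
          ![X 0,
            X 1 - Polynomial.aeval (X 0 : MvPolynomial (Fin 3) ℂ) p,
            X 2 - Polynomial.aeval (X 0 : MvPolynomial (Fin 3) ℂ) q] (pderiv i g) := by
  have hz : ∀ p : Polynomial ℂ, pderiv i (Polynomial.aeval (X 0 : MvPolynomial (Fin 3) ℂ) p) = 0 := by
    intro p
    rw [Derivation.map_aeval, pderiv_X_of_ne hi.symm, smul_zero]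
  induction g using MvPolynomial.induction_on with
  | C a => simp [algebraMap_eq]
  | add p q hp hq => simp only [map_add, hp, hq]
  | mul_X f j hf =>
    simp only [map_mul, Derivation.leibniz, hf, smul_eq_mul, map_add, aeval_X]
    congr 2
    fin_cases j <;> fin_cases i <;> simp [hz, pderiv_X] at hi ⊢

theorem aux_comp (p q : Polynomial ℂ) (g : MvPolynomial (Fin 3) ℂ) :
    aeval ![(Polynomial.X : Polynomial ℂ), 0, 0] (aeval
          ![X 0,
            X 1 - Polynomial.aeval (X 0 : MvPolynomial (Fin 3) ℂ) p,
            X 2 - Polynomial.aeval (X 0 : MvPolynomial (Fin 3) ℂ) q] g) =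
      aeval ![(Polynomial.X : Polynomial ℂ), -p, -q] g := by
  induction g using MvPolynomial.induction_on with
  | C a => simp
  | add p q hp hq => simp only [map_add, hp, hq]
  | mul_X f j hf =>
    simp only [map_mul, hf, aeval_X]
    congr 1
    fin_cases j <;> simp [← Polynomial.aeval_algHom_apply]

theorem aux_eval (p q : Polynomial ℂ) (g : MvPolynomial (Fin 3) ℂ) (x : ℂ) :
    (aeval ![(Polynomial.X : Polynomial ℂ), p, q] g).eval x = eval ![x, p.eval x, q.eval x] g := by
  induction g using MvPolynomial.induction_on with
  | C a => simp
  | add p q hp hq => simp only [map_add, Polynomial.eval_add, hp, hq]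
  | mul_X f j hf =>
    simp only [map_mul, Polynomial.eval_mul, hf, aeval_X, eval_X]
    congr 1
    fin_cases j <;> simp

/-- Solving `∂₂ g = ∂₃ g = 0` near the origin by an analytic curve. -/
theorem aux_curve (g s : MvPolynomial (Fin 3) ℂ) (hg : g = X 1 ^ 2 + X 2 ^ 2 + X 0 * s) :
    ∃ γ : ℂ → Fin 3 → ℂ, AnalyticAt ℂ γ 0 ∧ γ 0 = 0 ∧ ∀ᶠ x in nhds 0,
      γ x 0 = x ∧ eval (γ x) (pderiv 1 g) = 0 ∧ eval (γ x) (pderiv 2 g) = 0 := by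
  set a : ℂ := eval 0 (pderiv 1 s) with ha
  set b : ℂ := eval 0 (pderiv 2 s) with hb
  let L : (Fin 3 → ℂ) ≃ₗ[ℂ] (Fin 3 → ℂ) :=
    { toFun := fun z => ![z 0, a * z 0 + 2 * z 1, b * z 0 + 2 * z 2]
      invFun := fun z => ![z 0, (z 1 - a * z 0) / 2, (z 2 - b * z 0) / 2]
      map_add' := by
        intro x y; ext i; fin_cases i <;> simp <;> ring
      map_smul' := by
        intro x y; ext i; fin_cases i <;> simp <;> ring
      left_inv := by
        intro x; ext i; fin_cases i <;> simp
      right_inv := by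
        intro x; ext i; fin_cases i <;> simp <;> ring }
  let f' : (Fin 3 → ℂ) ≃L[ℂ] (Fin 3 → ℂ) := L.toContinuousLinearEquiv
  let Φ : (Fin 3 → ℂ) → (Fin 3 → ℂ) :=
    fun z => ![z 0, eval z (pderiv 1 g), eval z (pderiv 2 g)]
  have hΦ0 : Φ 0 = 0 := by
    ext i; fin_cases i <;> simp [Φ, hg, pderiv_X]
  have hΦa : ContDiffAt ℂ ⊤ Φ 0 := by
    apply AnalyticAt.contDiffAt
    refine analyticAt_pi_iff.2 ?_
    intro i
    fin_cases i
    · exact (ContinuousLinearMap.proj 0 : (Fin 3 → ℂ) →L[ℂ] ℂ).analyticAt 0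
    · exact AnalyticOnNhd.eval_mvPolynomial (pderiv 1 g) 0 trivial
    · exact AnalyticOnNhd.eval_mvPolynomial (pderiv 2 g) 0 trivial
  have hΦd : HasFDerivAt Φ (f' : (Fin 3 → ℂ) →L[ℂ] (Fin 3 → ℂ)) 0 := by
    rw [hasFDerivAt_pi']
    intro i
    fin_cases i
    · exact (ContinuousLinearMap.proj 0 : (Fin 3 → ℂ) →L[ℂ] ℂ).hasFDerivAt
    · refine (aux_hasFDeriv (pderiv 1 g) 0).congr_fderiv ?_
      ext v
      simp [f', L, Fin.sum_univ_three, hg, pderiv_X, ha]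
      exact Or.inl (map_ofNat _ 2)
    · refine (aux_hasFDeriv (pderiv 2 g) 0).congr_fderiv ?_
      ext v
      simp [f', L, Fin.sum_univ_three, hg, pderiv_X, hb]
      exact Or.inl (map_ofNat _ 2)
  have hn : (⊤ : WithTop ℕ∞) ≠ 0 := by simp
  let Ψ := hΦa.localInverse hΦd hn
  have hΨ : ContDiffAt ℂ ⊤ Ψ 0 := by
    have := hΦa.to_localInverse hΦd hn
    rwa [hΦ0] at this
  have hΨ0 : Ψ 0 = 0 := by
    have := hΦa.localInverse_apply_image hΦd hn
    rwa [hΦ0] at this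
  have hr : ∀ᶠ w in nhds 0, Φ (Ψ w) = w := by
    have := (hΦa.hasStrictFDerivAt' hΦd hn).eventually_right_inverse
    rwa [hΦ0] at this
  let ι : ℂ →L[ℂ] (Fin 3 → ℂ) := ContinuousLinearMap.single ℂ (fun _ : Fin 3 => ℂ) 0
  have hι : ι 0 = 0 := map_zero ι
  refine ⟨fun x => Ψ (ι x), ?_, ?_, ?_⟩
  · have h1 : AnalyticAt ℂ Ψ (ι 0) := by rw [hι]; exact hΨ.analyticAt
    exact h1.comp (ι.analyticAt 0)
  · simp only [hι, hΨ0]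
  · have ht : Filter.Tendsto ι (nhds 0) (nhds 0) := by
      have := ι.continuous.tendsto 0
      rwa [hι] at this
    filter_upwards [ht.eventually hr] with x hx
    have e0 := congrFun hx 0
    have e1 := congrFun hx 1
    have e2 := congrFun hx 2
    simp [Φ, ι] at e0 e1 e2
    exact ⟨e0, e1, e2⟩

open Filter Topology Asymptotics in
theorem aux_trunc (P : ℂ → ℂ) (hP : AnalyticAt ℂ P 0) (N : ℕ) :
    ∃ p : Polynomial ℂ, (fun x => P x - p.eval x) =O[𝓝 0] (fun x => x ^ N) := by
  obtain ⟨F, hF, h⟩ := hP.exists_eventuallyEq_sum_add_pow_mul N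
  refine ⟨∑ i ∈ Finset.range N, Polynomial.C (iteratedDeriv i P 0 / i.factorial) * Polynomial.X ^ i,
    ?_⟩
  have h1 : (fun x => x ^ N * F x) =O[𝓝 0] (fun x : ℂ => x ^ N * 1) :=
    (isBigO_refl _ _).mul (hF.continuousAt.isBigO_one ℂ)
  simp only [mul_one] at h1
  refine IsBigO.congr' h1 ?_ EventuallyEq.rfl
  filter_upwards [h] with x hx
  rw [hx, Polynomial.eval_finsetSum]
  have : ∑ i ∈ Finset.range N, (x ^ i / (i.factorial : ℂ)) • iteratedDeriv i P 0 =
      ∑ i ∈ Finset.range N,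
        (Polynomial.C (iteratedDeriv i P 0 / i.factorial) * Polynomial.X ^ i).eval x := by
    refine Finset.sum_congr rfl fun i _ => ?_
    simp
    ring
  rw [this]
  simp

open Filter Topology Asymptotics in
theorem aux_compare (γ δ : ℂ → Fin 3 → ℂ) (φ : ℂ → ℂ) (hγ : ContinuousAt γ 0)
    (hδ : ContinuousAt δ 0) (h : ∀ i, (fun x => γ x i - δ x i) =O[𝓝 0] φ)
    (f : MvPolynomial (Fin 3) ℂ) :
    (fun x => eval (γ x) f - eval (δ x) f) =O[𝓝 0] φ := by
  induction f using MvPolynomial.induction_on with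
  | C a => simpa using isBigO_zero _ _
  | add p q hp hq =>
    refine (hp.add hq).congr_left fun x => ?_
    simp only [map_add]; ring
  | mul_X p j hp =>
    have h1 : (fun x => γ x j) =O[𝓝 0] (fun _ => (1 : ℂ)) :=
      ((continuousAt_pi.1 hγ) j).isBigO_one ℂ
    have h2 : (fun x => eval (δ x) p) =O[𝓝 0] (fun _ => (1 : ℂ)) :=
      ((MvPolynomial.continuous_eval p).continuousAt.comp hδ).isBigO_one ℂ
    have h3 := (hp.mul h1).add (((h2.mul (h j))).congr_right (g₂ := fun x => φ x * 1)
      (fun x => by ring))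
    simp only [mul_one] at h3
    refine h3.congr_left fun x => ?_
    simp only [map_mul, eval_X]; ring

open Filter Topology in
theorem aux_not_zero (g : MvPolynomial (Fin 3) ℂ)
    (hiso : ∃ U ∈ nhds (0 : Fin 3 → ℂ),
      ∀ z ∈ U, (eval z g = 0 ∧ ∀ i : Fin 3, eval z (pderiv i g) = 0) → z = 0)
    (γ : ℂ → Fin 3 → ℂ) (hγ : AnalyticAt ℂ γ 0) (hγ0 : γ 0 = 0)
    (hc : ∀ᶠ x in nhds 0,
      γ x 0 = x ∧ eval (γ x) (pderiv 1 g) = 0 ∧ eval (γ x) (pderiv 2 g) = 0) :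
    ¬ ∀ᶠ x in nhds 0, eval (γ x) g = 0 := by
  intro hA
  obtain ⟨U, hU, hz⟩ := hiso
  have hmem : ∀ᶠ x in 𝓝 0, γ x ∈ U := hγ.continuousAt.eventually (by rwa [hγ0])
  have key : ∀ᶠ x : ℂ in 𝓝 0, x = 0 := by
    filter_upwards [hmem, hA.eventually_nhds, hc.eventually_nhds, hγ.eventually_analyticAt]
      with x hxU hxA hxc hxa
    obtain ⟨e0, e1, e2⟩ := hxc.self_of_nhds
    have hd := hxa.differentiableAt.hasDerivAt
    have hd0 : HasDerivAt (fun y => γ y 0) (deriv γ x 0) x := (hasDerivAt_pi.1 hd) 0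
    have hd1 : deriv γ x 0 = 1 := by
      refine hd0.unique ((hasDerivAt_id x).congr_of_eventuallyEq ?_)
      filter_upwards [hxc] with y hy using hy.1
    have hcomp := (aux_hasFDeriv g (γ x)).comp_hasDerivAt x hd
    have hzero : HasDerivAt ((fun w : Fin 3 → ℂ => eval w g) ∘ γ) 0 x := by
      refine (hasDerivAt_const x (0 : ℂ)).congr_of_eventuallyEq ?_
      filter_upwards [hxA] with y hy using hy
    have hu := hcomp.unique hzero
    simp [Fin.sum_univ_three, e1, e2, hd1] at hu
    have := hz (γ x) hxU ⟨hxA.self_of_nhds, fun i => by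
      fin_cases i
      · exact hu
      · exact e1
      · exact e2⟩
    rw [← e0, this]; rfl
  have h2 : ∀ᶠ x : ℂ in 𝓝[≠] 0, False := by
    filter_upwards [key.filter_mono nhdsWithin_le_nhds, self_mem_nhdsWithin] with x h1 h2
    exact h2 h1
  exact h2.exists.elim fun _ h => h

open Filter Topology Asymptotics in
theorem newton_principal_part_at_A1_point (g r : MvPolynomial (Fin 3) ℂ)
    (hg : g = X 1 ^ 2 + X 2 ^ 2 + r)
    (hr : ∀ mo ∈ r.support, 1 ≤ mo 0)
    (hiso : ∃ U ∈ nhds (0 : Fin 3 → ℂ),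
      ∀ z ∈ U, (eval z g = 0 ∧ ∀ i : Fin 3, eval z (pderiv i g) = 0) → z = 0) :
    ∃ (ℓ : ℕ) (c : ℂ) (p q : Polynomial ℂ) (R : MvPolynomial (Fin 3) ℂ),
      1 ≤ ℓ ∧ c ≠ 0 ∧ p.eval 0 = 0 ∧ q.eval 0 = 0 ∧
      aeval
          ![X 0,
            X 1 - Polynomial.aeval (X 0 : MvPolynomial (Fin 3) ℂ) p,
            X 2 - Polynomial.aeval (X 0 : MvPolynomial (Fin 3) ℂ) q] g =
        X 1 ^ 2 + X 2 ^ 2 + C c * X 0 ^ ℓ + R ∧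
      ∀ mo ∈ R.support, 1 ≤ mo 0 ∧ 2 * ℓ < 2 * mo 0 + ℓ * (mo 1 + mo 2) := by
  obtain ⟨s, rfl⟩ := (aux_X_dvd r).1 hr
  obtain ⟨γ, hγ, hγ0, hc⟩ := aux_curve g s hg
  have hγi : ∀ i, AnalyticAt ℂ (fun x => γ x i) 0 := analyticAt_pi_iff.1 hγ
  have hA : AnalyticAt ℂ (fun x => eval (γ x) g) 0 := AnalyticAt.aeval_mvPolynomial hγi g
  have hne : analyticOrderAt (fun x => eval (γ x) g) 0 ≠ ⊤ := by
    rw [Ne, analyticOrderAt_eq_top]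
    exact aux_not_zero g hiso γ hγ hγ0 hc
  obtain ⟨h, hh, hh0, hAh⟩ := hA.analyticOrderAt_ne_top.1 hne
  set ℓ := analyticOrderNatAt (fun x => eval (γ x) g) 0 with hℓ
  simp only [sub_zero, smul_eq_mul] at hAh
  have hℓ1 : 1 ≤ ℓ := by
    by_contra hlt
    have hl0 : ℓ = 0 := by omega
    have := hAh.self_of_nhds
    rw [hl0] at this
    simp only [hγ0, pow_zero, one_mul] at this
    apply hh0
    rw [← this, hg]
    simp
  have trunc : ∀ i : Fin 3, i ≠ 0 → ∃ p : Polynomial ℂ, p.eval 0 = 0 ∧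
      (fun x => γ x i - (-p).eval x) =O[𝓝 0] (fun x => x ^ (ℓ + 1)) := by
    intro i _
    obtain ⟨p, hp⟩ := aux_trunc _ (hγi i) (ℓ + 1)
    refine ⟨-p, ?_, by simpa using hp⟩
    obtain ⟨K, hK⟩ := hp.bound
    have := hK.self_of_nhds
    simpa [hγ0] using this
  obtain ⟨p, hp0, hp⟩ := trunc 1 (by decide)
  obtain ⟨q, hq0, hq⟩ := trunc 2 (by decide)
  let δ : ℂ → Fin 3 → ℂ := fun x => ![x, (-p).eval x, (-q).eval x]
  have hδ : ContinuousAt δ 0 := by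
    refine continuousAt_pi.2 fun i => ?_
    fin_cases i
    · exact continuousAt_id
    · exact (-p).continuous.continuousAt
    · exact (-q).continuous.continuousAt
  have hcmp := aux_compare γ δ (fun x => x ^ (ℓ + 1)) hγ.continuousAt hδ (by
    intro i
    fin_cases i
    · refine (isBigO_zero (fun x : ℂ => x ^ (ℓ + 1)) (𝓝 0)).congr' ?_ EventuallyEq.rfl
      filter_upwards [hc] with x hx
      simp [δ, hx.1]
    · exact hp
    · exact hq)
  -- the linear terms
  have hlin : ∀ f : MvPolynomial (Fin 3) ℂ, (∀ᶠ x in 𝓝 0, eval (γ x) f = 0) →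
      ∀ n < ℓ + 1, (aeval ![(Polynomial.X : Polynomial ℂ), -p, -q] f).coeff n = 0 := by
    intro f hf
    apply aux_poly_coeff
    refine IsBigO.mono ?_ nhdsWithin_le_nhds
    refine (hcmp f).neg_left.congr' ?_ EventuallyEq.rfl
    filter_upwards [hf] with x hx
    rw [aux_eval, hx]
    simp [δ]
  have hB := hlin _ (hc.mono fun x hx => hx.2.1)
  have hD := hlin _ (hc.mono fun x hx => hx.2.2)
  have hconst : ∀ n < ℓ + 1, (aeval ![(Polynomial.X : Polynomial ℂ), -p, -q] g
      - Polynomial.C (h 0) * Polynomial.X ^ ℓ).coeff n = 0 := by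
    apply aux_poly_coeff
    refine IsBigO.mono ?_ nhdsWithin_le_nhds
    have h1 : (fun x => h x - h 0) =O[𝓝 0] (fun x : ℂ => x) := by
      simpa using hh.differentiableAt.isBigO_sub
    have h2 : (fun x => x ^ ℓ * (h x - h 0)) =O[𝓝 0] (fun x : ℂ => x ^ (ℓ + 1)) := by
      simpa only [pow_succ] using (isBigO_refl (fun x : ℂ => x ^ ℓ) (𝓝 0)).mul h1
    refine ((hcmp g).neg_left.add h2).congr' ?_ EventuallyEq.rfl
    filter_upwards [hAh] with x hx
    rw [Polynomial.eval_sub, aux_eval, hx]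
    simp [δ]
    ring
  set g' := aeval
          ![X 0,
            X 1 - Polynomial.aeval (X 0 : MvPolynomial (Fin 3) ℂ) p,
            X 2 - Polynomial.aeval (X 0 : MvPolynomial (Fin 3) ℂ) q] g with hg'
  set R := g' - (X 1 ^ 2 + X 2 ^ 2 + C (h 0) * X 0 ^ ℓ) with hR
  refine ⟨ℓ, h 0, p, q, R, hℓ1, hh0, hp0, hq0, by rw [hR]; ring, ?_⟩
  have hX : X 0 ∣ R := by
    have hd : ∀ p : Polynomial ℂ, p.eval 0 = 0 →
        (X 0 : MvPolynomial (Fin 3) ℂ) ∣ Polynomial.aeval (X 0 : MvPolynomial (Fin 3) ℂ) p := by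
      intro p hp
      obtain ⟨u, rfl⟩ := (Polynomial.X_dvd_iff (f := p)).2 (by rw [Polynomial.coeff_zero_eq_eval_zero, hp])
      exact ⟨Polynomial.aeval (X 0) u, by simp⟩
    obtain ⟨u, hu⟩ := hd p hp0
    obtain ⟨v, hv⟩ := hd q hq0
    obtain ⟨w, hw⟩ : (X 0 : MvPolynomial (Fin 3) ℂ) ∣ X 0 ^ ℓ := dvd_pow_self _ (by omega)
    rw [hR, hg', hg, hw, hu, hv]
    simp only [map_add, map_mul, map_pow, aeval_X]
    simp only [Matrix.cons_val]
    refine ⟨-2 * X 1 * u + X 0 * u ^ 2 - 2 * X 2 * v + X 0 * v ^ 2 +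
      aeval ![X 0, X 1 - X 0 * u, X 2 - X 0 * v] s - C (h 0) * w, ?_⟩
    ring
  have hR0 : ∀ n < ℓ + 1, coeff (Finsupp.single 0 n) R = 0 := by
    intro n hn
    rw [← aux_coeff0, ← hconst n hn, hR, map_sub, hg', aux_comp]
    simp
  have hR1 : ∀ i : Fin 3, i ≠ 0 →
      (∀ n < ℓ + 1, (aeval ![(Polynomial.X : Polynomial ℂ), -p, -q] (pderiv i g)).coeff n = 0) →
      ∀ n < ℓ + 1, coeff (Finsupp.single 0 n + Finsupp.single i 1) R = 0 := by
    intro i hi hco n hn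
    have e1 := coeff_pderiv (i := i) R (Finsupp.single 0 n)
    rw [← aux_coeff0] at e1
    have e2 : aeval ![(Polynomial.X : Polynomial ℂ), 0, 0] (pderiv i R) =
        aeval ![(Polynomial.X : Polynomial ℂ), -p, -q] (pderiv i g) := by
      rw [hR, map_sub, hg', aux_pderiv i hi, map_sub, aux_comp]
      fin_cases i
      · exact absurd rfl hi
      · simp [pderiv_X]
      · simp [pderiv_X]
    rw [e2, hco n hn] at e1
    simpa [hi] using e1.symm
  intro mo hmo
  have h0 := (aux_X_dvd R).2 hX mo hmo
  refine ⟨h0, ?_⟩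
  rw [mem_support_iff] at hmo
  by_contra hlt
  have hle : 2 * mo 0 + ℓ * (mo 1 + mo 2) ≤ 2 * ℓ := by omega
  have hsum : mo 1 + mo 2 < 2 := by
    by_contra hge
    have : ℓ * 2 ≤ ℓ * (mo 1 + mo 2) := Nat.mul_le_mul_left _ (by omega)
    omega
  have hn : mo 0 < ℓ + 1 := by omega
  rcases (by omega : (mo 1 = 0 ∧ mo 2 = 0) ∨ (mo 1 = 1 ∧ mo 2 = 0) ∨ (mo 1 = 0 ∧ mo 2 = 1))
    with ⟨a1, a2⟩ | ⟨a1, a2⟩ | ⟨a1, a2⟩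
  · have : mo = Finsupp.single 0 (mo 0) := by
      ext i; fin_cases i <;> simp [a1, a2]
    exact hmo (this ▸ hR0 _ hn)
  · have : mo = Finsupp.single 0 (mo 0) + Finsupp.single 1 1 := by
      ext i; fin_cases i <;> simp [a1, a2]
    exact hmo (this ▸ hR1 1 (by decide) hB _ hn)
  · have : mo = Finsupp.single 0 (mo 0) + Finsupp.single 2 1 := by
      ext i; fin_cases i <;> simp [a1, a2]
    exact hmo (this ▸ hR1 2 (by decide) hD _ hn)
end

section
/- Let g ∈ MvPolynomial (Fin 3) ℂ, with variables X₁,X₂,X₃, be of the form g = X₂² + X₃² + r, where every exponent vector in the support of r has positive X₁-exponent. Let J ≥ 1 be an integer and assume: (i) for every integer j with 1 ≤ j ≤ 2J, the exponent vector (j,0,0) is not in the support of g (no pure power X₁^j occurs); (ii) for every integer j with 1 ≤ j < J, neither (j,1,0) nor (j,0,1) is in the support of g (no monomial X₁^j X₂ or X₁^j X₃ occurs). Assume moreover that the local Milnor algebra of g at the origin — the localization of MvPolynomial (Fin 3) ℂ / J(g) at the maximal ideal (X₁,X₂,X₃) — is finite-dimensional over ℂ. Then its dimension μ₀(g) satisfies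 μ₀(g) ≥ 2J − 1. (Claim 4.5 of the paper, proved via the deformation g + τX₁^{2J}, Kouchnirenko's theorem, and upper-semicontinuity of the Milnor number.) -/
open MvPolynomial

/-- The Jacobian ideal of `g`, generated by its partial derivatives. -/
noncomputable def jacobianIdeal (g : MvPolynomial (Fin 3) ℂ) :
    Ideal (MvPolynomial (Fin 3) ℂ) :=
  Ideal.span (Set.range fun i : Fin 3 => pderiv i g)

/-- The multiplicative set of polynomials with nonzero constant term, i.e. the
complement of the maximal ideal `(X₁, X₂, X₃)` of `ℂ[x₁,x₂,x₃]`. -/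
noncomputable def constTermNeZero : Submonoid (MvPolynomial (Fin 3) ℂ) :=
  Submonoid.comap (constantCoeff : MvPolynomial (Fin 3) ℂ →+* ℂ).toMonoidHom
    (nonZeroDivisors ℂ)

/-- The local Milnor algebra of `g` at the origin: the localization of the Milnor
algebra `ℂ[x₁,x₂,x₃]/J(g)` at the maximal ideal `(X₁,X₂,X₃)`, realized as the
quotient of the local ring `ℂ[x₁,x₂,x₃]_{(X₁,X₂,X₃)}` by the extension of the
Jacobian ideal. -/
noncomputable abbrev LocalMilnorAlgebra (g : MvPolynomial (Fin 3) ℂ) :=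
  Localization constTermNeZero ⧸
    (jacobianIdeal g).map
      (algebraMap (MvPolynomial (Fin 3) ℂ) (Localization constTermNeZero))

/-- First order Taylor expansion in directions of square zero. -/
lemma aeval_taylor {A : Type*} [CommRing A] [Algebra ℂ A] (x y z : A)
    (hyy : y * y = 0) (hyz : y * z = 0) (hzz : z * z = 0) (f : MvPolynomial (Fin 3) ℂ) :
    aeval ![x, y, z] f = aeval ![x, 0, 0] f + y * aeval ![x, 0, 0] (pderiv 1 f)
      + z * aeval ![x, 0, 0] (pderiv 2 f) := by
  induction f using MvPolynomial.induction_on with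
  | C a => simp
  | add p q hp hq => simp only [map_add, hp, hq]; ring
  | mul_X p i hp =>
    simp only [map_mul, hp, pderiv_mul, map_add, aeval_X]
    fin_cases i
    · simp [pderiv_X]; ring
    · simp [pderiv_X]
      linear_combination (aeval ![x, 0, 0] (pderiv 1 p)) * hyy +
        (aeval ![x, 0, 0] (pderiv 2 p)) * hyz
    · simp [pderiv_X]
      linear_combination (aeval ![x, 0, 0] (pderiv 1 p)) * hyz +
        (aeval ![x, 0, 0] (pderiv 2 p)) * hzz

lemma isNilpotent_aeval_sub {A : Type*} [CommRing A] [Algebra ℂ A] (v : Fin 3 → A)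
    (hv : ∀ i, IsNilpotent (v i)) (f : MvPolynomial (Fin 3) ℂ) :
    IsNilpotent (aeval v f - algebraMap ℂ A (constantCoeff f)) := by
  induction f using MvPolynomial.induction_on with
  | C a => simp
  | add p q hp hq =>
    have := (Commute.all _ _).isNilpotent_add hp hq
    convert this using 1
    simp only [map_add]; ring
  | mul_X p i hp =>
    simp only [map_mul, aeval_X, constantCoeff_X, mul_zero, map_zero, sub_zero]
    exact (Commute.all _ _).isNilpotent_mul_left (hv i)

lemma isUnit_aeval {A : Type*} [CommRing A] [Algebra ℂ A] (v : Fin 3 → A)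
    (hv : ∀ i, IsNilpotent (v i)) (f : MvPolynomial (Fin 3) ℂ) (hf : constantCoeff f ≠ 0) :
    IsUnit (aeval v f) := by
  have h := (isNilpotent_aeval_sub v hv f).isUnit_add_left_of_commute
    ((IsUnit.mk0 _ hf).map (algebraMap ℂ A)) (Commute.all _ _)
  simpa using h

lemma pow_dvd_aeval {A : Type*} [CommRing A] [Algebra ℂ A] (x : A) (k : ℕ)
    (f : MvPolynomial (Fin 3) ℂ)
    (hf : ∀ j < k, coeff (Finsupp.single (0 : Fin 3) j) f = 0) :
    x ^ k ∣ aeval ![x, 0, 0] f := by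
  rw [aeval_def, eval₂_eq']
  refine Finset.dvd_sum fun d hd => ?_
  rw [Fin.prod_univ_three]
  by_cases h1 : d 1 = 0
  · by_cases h2 : d 2 = 0
    · have hd0 : d = Finsupp.single 0 (d 0) := by
        ext i; fin_cases i <;> simp [h1, h2]
      have hk : k ≤ d 0 := by
        by_contra! hlt
        have := hf _ hlt
        rw [← hd0] at this
        exact (mem_support_iff.1 hd) this
      simp only [h1, h2, pow_zero, mul_one]
      exact Dvd.dvd.mul_left (pow_dvd_pow x hk) _
    · simp [h2]
  · simp [h1]

/-- Claim 4.5: if `g = x₂² + x₃² + r` (every monomial of `r` involving `x₁`)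
contains no pure power `x₁^j` for `1 ≤ j ≤ 2J` and no monomial `x₁^j x₂`,
`x₁^j x₃` for `1 ≤ j < J`, then its local Milnor number at the origin satisfies
`μ₀(g) ≥ 2J - 1`. -/
theorem local_milnor_number_lower_bound (g r : MvPolynomial (Fin 3) ℂ)
    (hg : g = X 1 ^ 2 + X 2 ^ 2 + r)
    (hr : ∀ mo ∈ r.support, 1 ≤ mo 0)
    (J : ℕ) (hJ : 1 ≤ J)
    (hpure : ∀ j : ℕ, 1 ≤ j → j ≤ 2 * J →
      coeff (Finsupp.single (0 : Fin 3) j) g = 0)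
    (hmixed : ∀ j : ℕ, 1 ≤ j → j < J →
      coeff (Finsupp.single (0 : Fin 3) j + Finsupp.single (1 : Fin 3) 1) g = 0 ∧
      coeff (Finsupp.single (0 : Fin 3) j + Finsupp.single (2 : Fin 3) 1) g = 0)
    (hfin : FiniteDimensional ℂ (LocalMilnorAlgebra g)) :
    2 * J - 1 ≤ Module.finrank ℂ (LocalMilnorAlgebra g) := by
  classical
  -- low order coefficients
  have hr0 : ∀ m : Fin 3 →₀ ℕ, m 0 = 0 → coeff m r = 0 := by
    intro m hm
    by_contra h
    have := hr m (mem_support_iff.2 h)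
    omega
  have hlow : ∀ m : Fin 3 →₀ ℕ, m 0 = 0 → coeff m g =
      (if Finsupp.single 1 2 = m then 1 else 0) + (if Finsupp.single 2 2 = m then 1 else 0) := by
    intro m hm
    rw [hg, coeff_add, coeff_add, hr0 m hm, coeff_X_pow, coeff_X_pow, add_zero]
  have hm1 : ∀ j < J, coeff (Finsupp.single (0 : Fin 3) j + Finsupp.single (1 : Fin 3) 1) g = 0 := by
    intro j hj
    rcases Nat.eq_zero_or_pos j with rfl | h
    · rw [hlow _ (by simp)]
      simp [Finsupp.single_eq_single_iff]
    · exact (hmixed j h hj).1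
  have hm2 : ∀ j < J, coeff (Finsupp.single (0 : Fin 3) j + Finsupp.single (2 : Fin 3) 1) g = 0 := by
    intro j hj
    rcases Nat.eq_zero_or_pos j with rfl | h
    · rw [hlow _ (by simp)]
      simp [Finsupp.single_eq_single_iff]
    · exact (hmixed j h hj).2
  have h11 : constantCoeff (pderiv 1 (pderiv 1 g)) = 2 := by
    rw [constantCoeff_eq, coeff_pderiv, coeff_pderiv, hlow _ (by simp), zero_add,
      ← Finsupp.single_add]
    simp [Finsupp.single_eq_single_iff]
    norm_num
  have h22 : constantCoeff (pderiv 2 (pderiv 2 g)) = 2 := by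
    rw [constantCoeff_eq, coeff_pderiv, coeff_pderiv, hlow _ (by simp), zero_add,
      ← Finsupp.single_add]
    simp [Finsupp.single_eq_single_iff]
    norm_num
  have hne1 : (Finsupp.single 1 2 : Fin 3 →₀ ℕ) ≠ Finsupp.single 2 1 + Finsupp.single 1 1 := by
    intro h
    simpa using DFunLike.congr_fun h 2
  have hne2 : (Finsupp.single 2 2 : Fin 3 →₀ ℕ) ≠ Finsupp.single 2 1 + Finsupp.single 1 1 := by
    intro h
    simpa using DFunLike.congr_fun h 1
  have h12 : constantCoeff (pderiv 2 (pderiv 1 g)) = 0 := by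
    rw [constantCoeff_eq, coeff_pderiv, coeff_pderiv, hlow _ (by simp), zero_add,
      if_neg hne1, if_neg hne2]
    simp
  have h21 : constantCoeff (pderiv 1 (pderiv 2 g)) = 0 := by
    rw [constantCoeff_eq, coeff_pderiv, coeff_pderiv, hlow _ (by simp), zero_add, add_comm,
      add_comm (Finsupp.single 1 1), if_neg hne1, if_neg hne2]
    simp
  -- the target algebra
  let P : Polynomial ℂ := Polynomial.X ^ (2 * J - 1)
  let A := Polynomial ℂ ⧸ Ideal.span {P}
  let x : A := Ideal.Quotient.mk _ Polynomial.X
  have hx : x ^ (2 * J - 1) = 0 := by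
    change Ideal.Quotient.mk _ (Polynomial.X ^ (2 * J - 1)) = (0 : A)
    exact Ideal.Quotient.eq_zero_iff_mem.2 (Ideal.mem_span_singleton_self _)
  have hxz : ∀ n, 2 * J - 1 ≤ n → x ^ n = 0 := fun n hn => pow_eq_zero_of_le hn hx
  have hxn : IsNilpotent x := ⟨_, hx⟩
  have hrank : Module.finrank ℂ A = 2 * J - 1 := by
    rw [finrank_quotient_span_eq_natDegree]; simp [P]
  let e := aeval (R := ℂ) ![x, 0, 0]
  obtain ⟨a, ha⟩ : x ^ J ∣ e (pderiv 1 g) := pow_dvd_aeval x J _ fun j hj => by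
    rw [coeff_pderiv, hm1 j hj, zero_mul]
  obtain ⟨b, hb⟩ : x ^ J ∣ e (pderiv 2 g) := pow_dvd_aeval x J _ fun j hj => by
    rw [coeff_pderiv, hm2 j hj, zero_mul]
  have h0 : e (pderiv 0 g) = 0 := by
    obtain ⟨c, hc⟩ : x ^ (2 * J - 1) ∣ e (pderiv 0 g) := pow_dvd_aeval x _ _ fun j hj => by
      rw [coeff_pderiv, ← Finsupp.single_add, hpure _ (by omega) (by omega), zero_mul]
    rw [hc, hx, zero_mul]
  obtain ⟨c1, hc1⟩ : x ^ (J - 1) ∣ e (pderiv 1 (pderiv 0 g)) := pow_dvd_aeval x _ _ fun j hj => by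
    rw [coeff_pderiv, coeff_pderiv, add_right_comm, ← Finsupp.single_add, hm1 _ (by omega)]
    simp
  obtain ⟨c2, hc2⟩ : x ^ (J - 1) ∣ e (pderiv 2 (pderiv 0 g)) := pow_dvd_aeval x _ _ fun j hj => by
    rw [coeff_pderiv, coeff_pderiv, add_right_comm, ← Finsupp.single_add, hm2 _ (by omega)]
    simp
  have hdet : IsUnit (e (pderiv 1 (pderiv 1 g) * pderiv 2 (pderiv 2 g)
      - pderiv 2 (pderiv 1 g) * pderiv 1 (pderiv 2 g))) := by
    refine isUnit_aeval _ ?_ _ ?_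
    · intro i
      fin_cases i
      · exact hxn
      · exact IsNilpotent.zero
      · exact IsNilpotent.zero
    · rw [map_sub, map_mul, map_mul, h11, h22, h12, h21]; norm_num
  obtain ⟨w, hw⟩ := hdet.exists_right_inv
  simp only [map_sub, map_mul] at hw
  let y : A := x ^ J * (w * (e (pderiv 2 (pderiv 1 g)) * b - e (pderiv 2 (pderiv 2 g)) * a))
  let z : A := x ^ J * (w * (e (pderiv 1 (pderiv 2 g)) * a - e (pderiv 1 (pderiv 1 g)) * b))
  have hxJ : x ^ J * x ^ J = 0 := by rw [← pow_add]; exact hxz _ (by omega)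
  have hxJ' : x ^ J * x ^ (J - 1) = 0 := by rw [← pow_add]; exact hxz _ (by omega)
  have hyy : y * y = 0 := by simp only [y]; rw [mul_mul_mul_comm, hxJ, zero_mul]
  have hyz : y * z = 0 := by simp only [y, z]; rw [mul_mul_mul_comm, hxJ, zero_mul]
  have hzz : z * z = 0 := by simp only [z]; rw [mul_mul_mul_comm, hxJ, zero_mul]
  let φ := aeval (R := ℂ) ![x, y, z]
  have hφ : ∀ f, φ f = e f + y * e (pderiv 1 f) + z * e (pderiv 2 f) :=
    aeval_taylor x y z hyy hyz hzz
  have hφ0 : φ (pderiv 0 g) = 0 := by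
    rw [hφ, h0, hc1, hc2]
    simp only [y, z]
    linear_combination ((w * (e (pderiv 2 (pderiv 1 g)) * b - e (pderiv 2 (pderiv 2 g)) * a)) * c1
      + (w * (e (pderiv 1 (pderiv 2 g)) * a - e (pderiv 1 (pderiv 1 g)) * b)) * c2) * hxJ'
  have hφ1 : φ (pderiv 1 g) = 0 := by
    rw [hφ, ha]
    simp only [y, z]
    linear_combination (- x ^ J * a) * hw
  have hφ2 : φ (pderiv 2 g) = 0 := by
    rw [hφ, hb]
    simp only [y, z]
    linear_combination (- x ^ J * b) * hw
  have hunit : ∀ s : constTermNeZero, IsUnit (φ s) := by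
    rintro ⟨s, hs⟩
    refine isUnit_aeval _ ?_ _ (nonZeroDivisors.ne_zero hs)
    intro i
    fin_cases i
    · exact hxn
    · exact ⟨2, by simpa [pow_two] using hyy⟩
    · exact ⟨2, by simpa [pow_two] using hzz⟩
  let ψ : Localization constTermNeZero →ₐ[ℂ] A := IsLocalization.liftAlgHom (f := φ) hunit
  have hψ : ∀ f, ψ (algebraMap _ _ f) = φ f := fun f => IsLocalization.lift_eq hunit f
  have hker : (jacobianIdeal g).map
      (algebraMap (MvPolynomial (Fin 3) ℂ) (Localization constTermNeZero)) ≤ RingHom.ker ψ := by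
    rw [Ideal.map_le_iff_le_comap, jacobianIdeal, Ideal.span_le]
    rintro _ ⟨i, rfl⟩
    change ψ (algebraMap _ _ (pderiv i g)) = 0
    rw [hψ]
    fin_cases i
    · exact hφ0
    · exact hφ1
    · exact hφ2
  let Ψ : LocalMilnorAlgebra g →ₐ[ℂ] A := Ideal.Quotient.liftₐ _ ψ fun a ha => hker ha
  have hsurj : Function.Surjective Ψ := by
    intro t
    obtain ⟨p, rfl⟩ := Ideal.Quotient.mk_surjective t
    refine ⟨Ideal.Quotient.mk _ (algebraMap _ _ (Polynomial.aeval (X 0 : MvPolynomial (Fin 3) ℂ) p)), ?_⟩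
    change ψ (algebraMap _ _ (Polynomial.aeval (X 0 : MvPolynomial (Fin 3) ℂ) p)) = _
    rw [hψ, ← Polynomial.aeval_algHom_apply]
    have hx0 : φ (X 0) = x := by simp [φ]
    rw [hx0]
    have := Polynomial.aeval_algHom_apply (Ideal.Quotient.mkₐ ℂ (Ideal.span {P})) Polynomial.X p
    rw [Polynomial.aeval_X_left_apply] at this
    exact this
  rw [← hrank]
  exact LinearMap.finrank_le_finrank_of_surjective (f := Ψ.toLinearMap) hsurj
end
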